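/- Fix α > 0 and suppose that for every β > 0 an eigen-measure ν_β for (α,β) with exponent P(β) is given. Then for every ε ∈ (0,1) there exists β₁ such that for all β ≥ β₁, ν_β([1]) > 0 and ν_β([0]) ≥ e^{(1−ε)β}·ν_β([1]); consequently ν_β([0])/ν_β([1]) → +∞ as β → +∞ (with exponential speed larger than 1−ε for every ε > 0). -/

import Mathlib

/-!
Conformality of an eigen-measure `ν` gives, for `a = 0, 1` with `c = 1, 3` respectively,
`ν([a^{n+1}*_a]) = e^{-P}·e^{-cβ/2^{n+1}}·ν([a^n*_a])`, where `[a^0*_a]` is the complement of `[a]`.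
As `P > 0`, the point `a^∞` is `ν`-null, so summing over the rings yields
`ν[a] = S_a·(1 - ν[a])` with `S_a = ∑_{n ≥ 1} e^{-nP}·e^{-cβ(1-2^{-n})}` (`cyl_measure`).
Moreover `ν[2] ≤ e^{-αβ}` (`cyl_two_le`).

Comparing the two series term by term (`tsum_weight_le`),
`S_1 ≤ N·e^{-3β/2} + e^{-2β(1-2^{-(N+1)})}·S_0` for every `N`. With `N = 0` this is
`S_1 ≤ e^{-β}·S_0`, which rules out `S_0 < 1` for large `β`, since the masses of `[0]`, `[1]`, `[2]`
add up to one; hence `ν[0] ≥ 1/2`. Now there are two cases (`ratio_bound`). If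
`S_0 ≥ e^{(1-ε)β}`, then `ν[0] = S_0·(1 - ν[0]) ≥ S_0·ν[1]` suffices. If `S_0 < e^{(1-ε)β}`, choose
`N` with `2^{-N} ≤ ε`; then `ν[1] ≤ S_1 ≤ N·e^{-3β/2} + e^{-β}`, which is at most
`e^{-(1-ε)β}/2` for large `β`. No information on the size of `P` is needed beyond `P > 0`.
-/

open MeasureTheory Filter Topology

noncomputable section

/-- The full shift space `Σ = {0,1,2}^ℕ`. -/
abbrev Sig : Type := ℕ → Fin 3

/-- The shift map `σ`. -/
def shift (x : Sig) : Sig := fun n => x (n + 1)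

/-- The fixed point `0^∞`. -/
def zeroSeq : Sig := fun _ => 0

/-- The fixed point `1^∞`. -/
def oneSeq : Sig := fun _ => 1

/-- Prepending a symbol: `a·x = (a, x₀, x₁, …)`. -/
def cons (a : Fin 3) (x : Sig) : Sig := fun n => Nat.casesOn n a x

open Classical in
/-- The metric `d(x,y) = (1/2)^(min{n : x n ≠ y n})`, with `d(x,x) = 0`. -/
def dist3 (x y : Sig) : ℝ :=
  if h : x ≠ y then (1 / 2 : ℝ) ^ Nat.find (Function.ne_iff.mp h) else 0

/-- The potential `A_α`. -/
def pot (α : ℝ) (x : Sig) : ℝ :=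
  if x 0 = 0 then -dist3 x zeroSeq
  else if x 0 = 1 then -(3 * dist3 x oneSeq)
  else -α

/-- The transfer operator `L_β` (for parameter `α`). -/
def transfer (α β : ℝ) (f : Sig → ℝ) : Sig → ℝ :=
  fun x => ∑ a : Fin 3, Real.exp (β * pot α (cons a x)) * f (cons a x)

/-- The ring `[a^n *_a] = {x : x_i = a for i < n, x_n ≠ a}`. -/
def ringSet (a : Fin 3) (n : ℕ) : Set Sig := {x | (∀ i < n, x i = a) ∧ x n ≠ a}

/-- The cylinder `[a] = {x : x₀ = a}`. -/
def cyl (a : Fin 3) : Set Sig := {x | x 0 = a}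

/-- `H` is locally ring-constant: constant on `[2]` and on each ring `[0^m*₀]`, `[1^m*₁]`. -/
def LocallyRingConstant (H : Sig → ℝ) : Prop :=
  (∀ x ∈ cyl 2, ∀ y ∈ cyl 2, H x = H y) ∧
  (∀ m : ℕ, 1 ≤ m → ∀ x ∈ ringSet 0 m, ∀ y ∈ ringSet 0 m, H x = H y) ∧
  (∀ m : ℕ, 1 ≤ m → ∀ x ∈ ringSet 1 m, ∀ y ∈ ringSet 1 m, H x = H y)

/-- An eigen-measure for `(α,β)` with exponent `P`:  a Borel probability measure `ν`
with `P > 0` and `∫ L_β f dν = e^P ∫ f dν` for every continuous `f`. -/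
structure IsEigenMeasure (α β P : ℝ) (ν : Measure Sig) : Prop where
  P_pos : 0 < P
  prob : IsProbabilityMeasure ν
  eigenMeas : ∀ f : Sig → ℝ, Continuous f →
    ∫ x, transfer α β f x ∂ν = Real.exp P * ∫ x, f x ∂ν

/-- Eigen-data `(P, H, ν)` for `(α,β)`. -/
structure IsEigenData (α β P : ℝ) (H : Sig → ℝ) (ν : Measure Sig) : Prop where
  P_pos : 0 < P
  H_cont : Continuous H
  H_pos : ∀ x, 0 < H x
  eigenFun : ∀ x, transfer α β H x = Real.exp P * H x
  prob : IsProbabilityMeasure ν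
  eigenMeas : ∀ f : Sig → ℝ, Continuous f →
    ∫ x, transfer α β f x ∂ν = Real.exp P * ∫ x, f x ∂ν

/-- The Gibbs measure `μ(B) = (∫_B H dν)/(∫ H dν)`. -/
def gibbs (H : Sig → ℝ) (ν : Measure Sig) : Measure Sig :=
  (ν.withDensity (fun x => ENNReal.ofReal (H x)) Set.univ)⁻¹ •
    ν.withDensity (fun x => ENNReal.ofReal (H x))

/-- Weak convergence (as `β → +∞`) of a family of measures to a measure `μ∞`:
convergence of integrals of every bounded continuous function. -/
def WeakLimit (μ : ℝ → Measure Sig) (μlim : Measure Sig) : Prop :=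
  ∀ f : Sig → ℝ, Continuous f → (∃ C : ℝ, ∀ x, |f x| ≤ C) →
    Tendsto (fun β => ∫ x, f x ∂(μ β)) atTop (nhds (∫ x, f x ∂μlim))

/-- `F(Z,β) = Σ_{k=0}^∞ e^{−kZ}·e^{β/2^{k+1}}`. -/
def Ffun (Z β : ℝ) : ℝ := ∑' k : ℕ, Real.exp (-(k : ℝ) * Z) * Real.exp (β / 2 ^ (k + 1))

/-- `Fpartial Z β m = F_{m-1}(Z,β) = Σ_{k=0}^{m-1} e^{−kZ}·e^{β/2^{k+1}}` (so `Fpartial Z β 0 = F_{-1} = 0`). -/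
def Fpartial (Z β : ℝ) (m : ℕ) : ℝ :=
  ∑ k ∈ Finset.range m, Real.exp (-(k : ℝ) * Z) * Real.exp (β / 2 ^ (k + 1))

/-- The weight `e^{-(n+1)P}·e^{-cβ(1-2^{-(n+1)})}`: the ratio `ν([a^{n+1}*_a]) / ν([a]ᶜ)` for an
eigen-measure, when the potential on `[a]` is `-c·d(·, a^∞)`. -/
def ringWeight (P β c : ℝ) (n : ℕ) : ℝ :=
  Real.exp (-((n + 1 : ℕ) * P)) * Real.exp (-(c * β * (1 - (1 / 2) ^ (n + 1))))

/-- The cylinder `[a^n]` of sequences starting with at least `n` symbols `a`. -/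
def prefixSet (a : Fin 3) (n : ℕ) : Set Sig := {x | ∀ i < n, x i = a}

/-! ### Combinatorics of rings and cylinders -/

lemma isClopen_coord (n : ℕ) (a : Fin 3) : IsClopen {x : Sig | x n = a} :=
  (isClopen_discrete ({a} : Set (Fin 3))).preimage (continuous_apply n)

lemma isClopen_prefixSet (a : Fin 3) (n : ℕ) : IsClopen (prefixSet a n) := by
  have h : prefixSet a n = ⋂ i ∈ Finset.range n, {x : Sig | x i = a} := by
    ext x; simp [prefixSet]
  rw [h]
  exact isClopen_biInter_finset fun i _ => isClopen_coord i a

lemma ringSet_eq_diff (a : Fin 3) (n : ℕ) :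
    ringSet a n = prefixSet a n \ prefixSet a (n + 1) := by
  ext x
  simp only [ringSet, prefixSet, Set.mem_sdiff, Set.mem_ofPred_eq, Nat.forall_lt_succ_right]
  tauto

lemma isClopen_ringSet (a : Fin 3) (n : ℕ) : IsClopen (ringSet a n) := by
  rw [ringSet_eq_diff]
  exact (isClopen_prefixSet a n).diff (isClopen_prefixSet a (n + 1))

lemma cons_mem_prefixSet (a b : Fin 3) (n : ℕ) (x : Sig) :
    cons b x ∈ prefixSet a (n + 1) ↔ b = a ∧ x ∈ prefixSet a n := by
  constructor
  · intro h
    exact ⟨h 0 (by omega), fun i hi => h (i + 1) (by omega)⟩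
  · rintro ⟨h0, h⟩ i hi
    cases i with
    | zero => exact h0
    | succ i => exact h i (by omega)

lemma cons_mem_ringSet (a b : Fin 3) (n : ℕ) (x : Sig) :
    cons b x ∈ ringSet a (n + 1) ↔ b = a ∧ x ∈ ringSet a n := by
  simp only [ringSet_eq_diff, Set.mem_sdiff, cons_mem_prefixSet]
  tauto

lemma prefixSet_one (a : Fin 3) : prefixSet a 1 = cyl a := by
  ext x; simp [prefixSet, cyl]

lemma ringSet_zero (a : Fin 3) : ringSet a 0 = (cyl a)ᶜ := by
  ext x; simp [ringSet, cyl]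

lemma dist3_of_mem_ringSet {a : Fin 3} {n : ℕ} {x : Sig} (hx : x ∈ ringSet a n) :
    dist3 x (fun _ => a) = (1 / 2 : ℝ) ^ n := by
  have hne : x ≠ fun _ => a := fun h => hx.2 (congrFun h n)
  unfold dist3
  rw [dif_pos hne]
  congr 1
  rw [Nat.find_eq_iff]
  exact ⟨hx.2, fun i hi => by simpa using hx.1 i hi⟩

lemma dist3_nonneg (x y : Sig) : 0 ≤ dist3 x y := by
  unfold dist3
  split_ifs <;> positivity

/-! ### Mass of cylinders under an eigen-measure -/

/-- Conformality on a clopen set `B ⊆ [a]`, whose image under the shift is `C`. -/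
lemma eigen_indicator {α β P : ℝ} {ν : Measure Sig} (h : IsEigenMeasure α β P ν)
    (a : Fin 3) {B C : Set Sig} (hB : IsClopen B)
    (hBC : ∀ b x, cons b x ∈ B ↔ b = a ∧ x ∈ C) :
    ∫ x, C.indicator (fun x => Real.exp (β * pot α (cons a x))) x ∂ν =
      Real.exp P * ν.real B := by
  have hcont : Continuous (B.indicator (fun _ => (1 : ℝ))) :=
    continuous_const.indicator (by simp [hB.frontier_eq])
  have key := h.eigenMeas _ hcont
  rw [integral_indicator_const _ hB.isOpen.measurableSet, smul_eq_mul, mul_one] at key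
  rw [← key]
  congr 1
  ext x
  unfold transfer
  rw [Finset.sum_eq_single a]
  · by_cases hx : x ∈ C
    · rw [Set.indicator_of_mem hx, Set.indicator_of_mem ((hBC a x).2 ⟨rfl, hx⟩), mul_one]
    · rw [Set.indicator_of_notMem hx,
        Set.indicator_of_notMem (fun h' => hx ((hBC a x).1 h').2), mul_zero]
  · intro b _ hb
    rw [Set.indicator_of_notMem (fun h' => hb ((hBC b x).1 h').1), mul_zero]
  · simp

/-- On a cylinder `[a]` where the potential is `-c·d(·, a^∞)` the shift maps `[a^{n+1}*_a]` onto
`[a^n*_a]` and the potential is constant there. -/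
lemma ring_step {α β P c : ℝ} {ν : Measure Sig} (h : IsEigenMeasure α β P ν) {a : Fin 3}
    (hpot : ∀ x : Sig, x 0 = a → pot α x = -(c * dist3 x (fun _ => a))) (n : ℕ) :
    Real.exp (-(c * β * (1 / 2) ^ (n + 1))) * ν.real (ringSet a n) =
      Real.exp P * ν.real (ringSet a (n + 1)) := by
  rw [← eigen_indicator h a (isClopen_ringSet a (n + 1)) (cons_mem_ringSet a · n ·)]
  have hind : (ringSet a n).indicator (fun x => Real.exp (β * pot α (cons a x))) =
      (ringSet a n).indicator (fun _ => Real.exp (-(c * β * (1 / 2) ^ (n + 1)))) := by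
    refine Set.indicator_congr fun x hx => ?_
    rw [hpot (cons a x) rfl, dist3_of_mem_ringSet ((cons_mem_ringSet a a n x).2 ⟨rfl, hx⟩)]
    congr 1; ring
  rw [hind, integral_indicator_const _ (isClopen_ringSet a n).isOpen.measurableSet,
    smul_eq_mul, mul_comm]

lemma ring_measure {α β P c : ℝ} {ν : Measure Sig} (h : IsEigenMeasure α β P ν) {a : Fin 3}
    (hpot : ∀ x : Sig, x 0 = a → pot α x = -(c * dist3 x (fun _ => a))) (n : ℕ) :
    ν.real (ringSet a (n + 1)) = ringWeight P β c n * ν.real (ringSet a 0) := by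
  have step : ∀ m, ν.real (ringSet a (m + 1)) =
      Real.exp (-P) * Real.exp (-(c * β * (1 / 2) ^ (m + 1))) * ν.real (ringSet a m) := by
    intro m
    rw [mul_assoc, ring_step h hpot m, ← mul_assoc, ← Real.exp_add]
    simp
  induction n with
  | zero =>
    rw [step 0, ringWeight]
    congr 3 <;> norm_num
  | succ n ih =>
    rw [step (n + 1), ih, ringWeight, ringWeight, ← mul_assoc]
    congr 1
    simp only [← Real.exp_add]
    congr 1
    push_cast
    ring

/-- Since `P > 0` and the potential is nonpositive, `ν([a^n])` decays at least like `e^{-nP}`;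
in particular the fixed point `a^∞` has no mass. -/
lemma prefix_measure_le {α β P c : ℝ} {ν : Measure Sig} (h : IsEigenMeasure α β P ν)
    (hβ : 0 ≤ β) (hc : 0 ≤ c) {a : Fin 3}
    (hpot : ∀ x : Sig, x 0 = a → pot α x = -(c * dist3 x (fun _ => a))) (n : ℕ) :
    ν.real (prefixSet a n) ≤ Real.exp (-P) ^ n := by
  have := h.prob
  induction n with
  | zero => simp
  | succ n ih =>
    have h1 := eigen_indicator h a (isClopen_prefixSet a (n + 1)) (cons_mem_prefixSet a · n ·)
    have h2 : ∫ x, (prefixSet a n).indicator (fun x => Real.exp (β * pot α (cons a x))) x ∂ν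
        ≤ ∫ x, (prefixSet a n).indicator (fun _ => (1 : ℝ)) x ∂ν := by
      refine integral_mono_of_nonneg ?_ ?_ ?_
      · exact Eventually.of_forall fun x => Set.indicator_nonneg (fun _ _ => (Real.exp_pos _).le) x
      · exact (integrable_const (1 : ℝ)).indicator (isClopen_prefixSet a n).isOpen.measurableSet
      · refine Eventually.of_forall fun x => ?_
        refine Set.indicator_le_indicator ?_
        rw [hpot (cons a x) rfl, Real.exp_le_one_iff]
        have := mul_nonneg hβ (mul_nonneg hc (dist3_nonneg (cons a x) (fun _ => a)))
        linarith
    rw [integral_indicator_const _ (isClopen_prefixSet a n).isOpen.measurableSet,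
      smul_eq_mul, mul_one, h1] at h2
    calc ν.real (prefixSet a (n + 1))
        = Real.exp (-P) * (Real.exp P * ν.real (prefixSet a (n + 1))) := by
          rw [← mul_assoc, ← Real.exp_add]; simp
      _ ≤ Real.exp (-P) * Real.exp (-P) ^ n :=
          mul_le_mul_of_nonneg_left (h2.trans ih) (Real.exp_pos _).le
      _ = _ := by ring

lemma ringWeight_pos (P β c : ℝ) (n : ℕ) : 0 < ringWeight P β c n := by
  unfold ringWeight; positivity

lemma half_pow_le_one (n : ℕ) : (1 / 2 : ℝ) ^ n ≤ 1 := pow_le_one₀ (by norm_num) (by norm_num)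

lemma summable_ringWeight {P β c : ℝ} (hP : 0 < P) (hβ : 0 ≤ β) (hc : 0 ≤ c) :
    Summable (ringWeight P β c) := by
  have hg : Summable fun n : ℕ => Real.exp (-P) ^ n :=
    summable_geometric_of_lt_one (Real.exp_pos _).le (by simpa using hP)
  refine Summable.of_nonneg_of_le (fun n => (ringWeight_pos P β c n).le) (fun n => ?_)
    ((summable_nat_add_iff 1).2 hg)
  have h1 : Real.exp (-(c * β * (1 - (1 / 2) ^ (n + 1)))) ≤ 1 := by
    rw [Real.exp_le_one_iff]
    have := mul_nonneg (mul_nonneg hc hβ) (sub_nonneg.2 (half_pow_le_one (n + 1)))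
    linarith
  calc ringWeight P β c n ≤ Real.exp (-((n + 1 : ℕ) * P)) * 1 :=
        mul_le_mul_of_nonneg_left h1 (Real.exp_pos _).le
    _ = Real.exp (-P) ^ (n + 1) := by
        rw [mul_one, ← Real.exp_nat_mul]; congr 1; ring

/-- `ν[a] = S·(1 - ν[a])` with `S` the sum of the ring weights: `[a]` is, up to the null point
`a^∞`, the disjoint union of the rings `[a^n*_a]`, `n ≥ 1`. -/
lemma cyl_measure {α β P c : ℝ} {ν : Measure Sig} (h : IsEigenMeasure α β P ν)
    (hβ : 0 ≤ β) (hc : 0 ≤ c) {a : Fin 3}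
    (hpot : ∀ x : Sig, x 0 = a → pot α x = -(c * dist3 x (fun _ => a))) :
    ν.real (cyl a) = (∑' n, ringWeight P β c n) * (1 - ν.real (cyl a)) := by
  have := h.prob
  have hr0 : ν.real (ringSet a 0) = 1 - ν.real (cyl a) := by
    rw [ringSet_zero, ← prefixSet_one,
      probReal_compl_eq_one_sub (isClopen_prefixSet a 1).isOpen.measurableSet]
  have hring : ∀ n, ν.real (ringSet a n) =
      ν.real (prefixSet a n) - ν.real (prefixSet a (n + 1)) := by
    intro n
    have hsub : prefixSet a (n + 1) ⊆ prefixSet a n := fun x hx i hi => hx i (by omega)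
    rw [ringSet_eq_diff, measureReal_sdiff hsub
      (isClopen_prefixSet a (n + 1)).isOpen.measurableSet]
  have htel : ∀ N, ∑ n ∈ Finset.range N, ringWeight P β c n * (1 - ν.real (cyl a)) =
      ν.real (cyl a) - ν.real (prefixSet a (N + 1)) := by
    intro N
    rw [← hr0, Finset.sum_congr rfl fun n _ => (ring_measure h hpot n).symm.trans (hring (n + 1)),
      Finset.sum_range_sub' (fun n => ν.real (prefixSet a (n + 1))), ← prefixSet_one]
  have hlim : Tendsto (fun N => ν.real (prefixSet a (N + 1))) atTop (𝓝 0) := by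
    have hg : Tendsto (fun N : ℕ => Real.exp (-P) ^ N) atTop (𝓝 0) :=
      tendsto_pow_atTop_nhds_zero_of_lt_one (Real.exp_pos _).le (by simpa using h.P_pos)
    exact squeeze_zero (fun _ => measureReal_nonneg)
      (fun N => prefix_measure_le h hβ hc hpot (N + 1)) ((tendsto_add_atTop_iff_nat 1).2 hg)
  have hs := ((summable_ringWeight h.P_pos hβ hc).hasSum.mul_right
    (1 - ν.real (cyl a))).tendsto_sum_nat
  simp only [htel] at hs
  have h2 := hlim.const_sub (ν.real (cyl a))
  rw [sub_zero] at h2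
  exact tendsto_nhds_unique h2 hs

lemma cyl_two_le {α β P : ℝ} {ν : Measure Sig} (h : IsEigenMeasure α β P ν) :
    ν.real (cyl 2) ≤ Real.exp (-(α * β)) := by
  have := h.prob
  have h1 := eigen_indicator h 2 (B := cyl 2) (C := Set.univ) (isClopen_coord 0 2)
    (fun b x => by simp [cyl, cons])
  have hp : ∀ x, pot α (cons 2 x) = -α := fun x => by simp [pot, cons]
  simp only [Set.indicator_univ, hp, integral_const, probReal_univ, one_smul] at h1
  have hP : 1 ≤ Real.exp P := Real.one_le_exp h.P_pos.le
  have h0 : 0 ≤ ν.real (cyl 2) := measureReal_nonneg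
  calc ν.real (cyl 2) ≤ Real.exp P * ν.real (cyl 2) := le_mul_of_one_le_left h0 hP
    _ = Real.exp (β * -α) := h1.symm
    _ = _ := by congr 1; ring

lemma cyl_sum {ν : Measure Sig} [IsProbabilityMeasure ν] :
    ν.real (cyl 0) + ν.real (cyl 1) + ν.real (cyl 2) = 1 := by
  have hm : ∀ a, MeasurableSet (cyl a) := fun a => (isClopen_coord 0 a).isOpen.measurableSet
  have d01 : Disjoint (cyl 0) (cyl 1) :=
    Set.disjoint_left.2 fun x (h0 : x 0 = 0) (h1 : x 0 = 1) => by simp [h0] at h1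
  have d2 : Disjoint (cyl 0 ∪ cyl 1) (cyl 2) :=
    Set.disjoint_left.2 fun x h01 (h2 : x 0 = 2) => by simp [cyl, h2] at h01
  rw [← measureReal_union d01 (hm 1), ← measureReal_union d2 (hm 2)]
  have : cyl 0 ∪ cyl 1 ∪ cyl 2 = Set.univ := by
    ext x
    simp only [cyl, Set.mem_union, Set.mem_ofPred_eq, Set.mem_univ, iff_true]
    generalize x 0 = b
    fin_cases b <;> simp
  rw [this, probReal_univ]

/-! ### Comparison of the two weight sums -/

/-- The `n`-th weight for `c = 3` is `e^{-2β(1-2^{-(n+1)})}` times the one for `c = 1`, and is at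
most `e^{-3β/2}`; the former bound is used for `n ≥ N`, the latter for `n < N`. -/
lemma tsum_weight_le {P β : ℝ} (hP : 0 < P) (hβ : 0 ≤ β) (N : ℕ) :
    ∑' n, ringWeight P β 3 n ≤ N * Real.exp (-(3 / 2 * β)) +
      Real.exp (-(2 * β * (1 - (1 / 2) ^ (N + 1)))) * ∑' n, ringWeight P β 1 n := by
  have s3 := summable_ringWeight (c := 3) hP hβ (by norm_num)
  have s1 := summable_ringWeight (c := 1) hP hβ (by norm_num)
  rw [← s3.sum_add_tsum_nat_add N]
  refine add_le_add ?_ ?_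
  · have hb : ∀ n ∈ Finset.range N, ringWeight P β 3 n ≤ Real.exp (-(3 / 2 * β)) := by
      intro n _
      rw [ringWeight, ← Real.exp_add, Real.exp_le_exp]
      have h1 : (1 / 2 : ℝ) ^ (n + 1) ≤ 1 / 2 := by
        rw [pow_succ]; linarith [half_pow_le_one n]
      have h2 : 0 ≤ ((n + 1 : ℕ) : ℝ) * P := by positivity
      nlinarith
    simpa using Finset.sum_le_card_nsmul _ _ _ hb
  · calc ∑' n, ringWeight P β 3 (n + N)
        ≤ ∑' n, Real.exp (-(2 * β * (1 - (1 / 2) ^ (N + 1)))) * ringWeight P β 1 (n + N) := by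
          refine Summable.tsum_le_tsum (fun n => ?_) ((summable_nat_add_iff N).2 s3)
            (((summable_nat_add_iff N).2 s1).mul_left _)
          simp only [ringWeight, ← Real.exp_add]
          rw [Real.exp_le_exp]
          have h1 : (1 / 2 : ℝ) ^ (n + N + 1) ≤ (1 / 2) ^ (N + 1) :=
            pow_le_pow_of_le_one (by norm_num) (by norm_num) (by omega)
          nlinarith
      _ = Real.exp (-(2 * β * (1 - (1 / 2) ^ (N + 1)))) * ∑' n, ringWeight P β 1 (n + N) :=
          tsum_mul_left
      _ ≤ _ := by
          refine mul_le_mul_of_nonneg_left ?_ (Real.exp_pos _).le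
          rw [← s1.sum_add_tsum_nat_add N]
          exact le_add_of_nonneg_left
            (Finset.sum_nonneg fun n _ => (ringWeight_pos P β 1 n).le)

/-- The quantitative estimate at a fixed `β`; `hβ1` and `hβ2` hold for all large `β`. -/
lemma ratio_bound {α β P ε : ℝ} {ν : Measure Sig} (h : IsEigenMeasure α β P ν) (hβ : 0 < β)
    {N : ℕ} (hN : (1 / 2 : ℝ) ^ N ≤ ε)
    (hβ1 : Real.exp (-β) + Real.exp (-(α * β)) ≤ 1 / 2)
    (hβ2 : N * Real.exp (-(1 / 2 * β)) + Real.exp (-(ε * β)) ≤ 1 / 2) :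
    0 < ν.real (cyl 1) ∧ Real.exp ((1 - ε) * β) * ν.real (cyl 1) ≤ ν.real (cyl 0) := by
  have := h.prob
  have hν0 := cyl_measure (c := 1) (a := 0) h hβ.le (by norm_num)
    (fun x hx => by simp [pot, hx]; rfl)
  have hν1 := cyl_measure (c := 3) (a := 1) h hβ.le (by norm_num)
    (fun x hx => by simp [pot, hx]; rfl)
  have hS (N : ℕ) := tsum_weight_le h.P_pos hβ.le N
  have hS1 : 0 < ∑' n, ringWeight P β 3 n :=
    (summable_ringWeight h.P_pos hβ.le (by norm_num)).tsum_pos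
      (fun n => (ringWeight_pos P β 3 n).le) 0 (ringWeight_pos P β 3 0)
  have hS0 : 0 < ∑' n, ringWeight P β 1 n :=
    (summable_ringWeight h.P_pos hβ.le (by norm_num)).tsum_pos
      (fun n => (ringWeight_pos P β 1 n).le) 0 (ringWeight_pos P β 1 0)
  have hsum := cyl_sum (ν := ν)
  have hν2 := cyl_two_le h
  have n0 : 0 ≤ ν.real (cyl 0) := measureReal_nonneg
  have n1 : 0 ≤ ν.real (cyl 1) := measureReal_nonneg
  have n2 : 0 ≤ ν.real (cyl 2) := measureReal_nonneg
  generalize (∑' n, ringWeight P β 3 n) = S1 at *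
  generalize (∑' n, ringWeight P β 1 n) = S0 at *
  generalize ν.real (cyl 0) = p0 at *
  generalize ν.real (cyl 1) = p1 at *
  generalize ν.real (cyl 2) = p2 at *
  have hp1 : 0 < p1 := by
    rcases n1.eq_or_lt with h0 | h0
    · rw [← h0] at hν1; linarith
    · exact h0
  have hp1S : p1 ≤ S1 := by nlinarith
  refine ⟨hp1, ?_⟩
  -- If `S0 < 1`, then `ν[0] < 1/2` while `ν[1] ≤ S1 ≤ e^{-β}·S0` and `ν[2] ≤ e^{-αβ}`.
  have hp0 : 1 / 2 ≤ p0 := by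
    by_contra! hlt
    have hS01 : S0 < 1 := by
      by_contra! h1
      nlinarith
    have h3 := hS 0
    have h4 : -(2 * β * (1 - (1 / 2 : ℝ) ^ (0 + 1))) = -β := by ring
    rw [h4] at h3
    have := Real.exp_pos (-β)
    have h5 : Real.exp (-β) * S0 ≤ Real.exp (-β) := by nlinarith
    simp only [Nat.cast_zero, zero_mul, zero_add] at h3
    linarith
  rcases le_or_gt (Real.exp ((1 - ε) * β)) S0 with hcase | hcase
  -- For large `S0`, use `ν[0] = S0·(1 - ν[0]) ≥ S0·ν[1]`.
  · calc Real.exp ((1 - ε) * β) * p1 ≤ S0 * p1 := mul_le_mul_of_nonneg_right hcase n1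
      _ ≤ S0 * (1 - p0) := mul_le_mul_of_nonneg_left (by linarith) hS0.le
      _ = p0 := hν0.symm
  -- Otherwise `ν[1] ≤ S1`, and the upper bound on `S0` makes `S1` small.
  · have hE : 0 < Real.exp ((1 - ε) * β) := Real.exp_pos _
    have hNε : 0 < (1 / 2 : ℝ) ^ N := by positivity
    have t1 : Real.exp ((1 - ε) * β) * (N * Real.exp (-(3 / 2 * β))) ≤
        N * Real.exp (-(1 / 2 * β)) := by
      rw [mul_left_comm, ← Real.exp_add]
      refine mul_le_mul_of_nonneg_left (Real.exp_le_exp.2 ?_) (Nat.cast_nonneg N)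
      nlinarith
    have t2 : Real.exp ((1 - ε) * β) * (Real.exp (-(2 * β * (1 - (1 / 2) ^ (N + 1)))) * S0) ≤
        Real.exp (-(ε * β)) := by
      calc _ ≤ Real.exp ((1 - ε) * β) * (Real.exp (-(2 * β * (1 - (1 / 2) ^ (N + 1)))) *
              Real.exp ((1 - ε) * β)) := by gcongr
        _ ≤ _ := by
            simp only [← Real.exp_add]
            rw [Real.exp_le_exp, pow_succ]
            nlinarith
    have t3 := mul_le_mul_of_nonneg_left (hp1S.trans (hS N)) hE.le
    rw [mul_add] at t3
    linarith

lemma tendsto_exp_neg_mul {c : ℝ} (hc : 0 < c) :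
    Tendsto (fun β : ℝ => Real.exp (-(c * β))) atTop (𝓝 0) :=
  Real.tendsto_exp_neg_atTop_nhds_zero.comp (tendsto_id.const_mul_atTop hc)

lemma eventually_ratio {α : ℝ} (hα : 0 < α) {P : ℝ → ℝ} {ν : ℝ → Measure Sig}
    (hE : ∀ β > (0 : ℝ), IsEigenMeasure α β (P β) (ν β)) {ε : ℝ} (hε : 0 < ε) :
    ∀ᶠ β in atTop, 0 < (ν β).real (cyl 1) ∧
      Real.exp ((1 - ε) * β) * (ν β).real (cyl 1) ≤ (ν β).real (cyl 0) := by
  obtain ⟨N, hN⟩ := exists_pow_lt_of_lt_one hε (by norm_num : (1 / 2 : ℝ) < 1)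
  have l1 : Tendsto (fun β : ℝ => Real.exp (-β) + Real.exp (-(α * β))) atTop (𝓝 0) := by
    simpa using Real.tendsto_exp_neg_atTop_nhds_zero.add (tendsto_exp_neg_mul hα)
  have l2 : Tendsto (fun β : ℝ => N * Real.exp (-(1 / 2 * β)) + Real.exp (-(ε * β)))
      atTop (𝓝 0) := by
    simpa using ((tendsto_exp_neg_mul (by norm_num : (0 : ℝ) < 1 / 2)).const_mul (N : ℝ)).add
      (tendsto_exp_neg_mul hε)
  filter_upwards [eventually_gt_atTop 0, l1.eventually_le_const (by norm_num : (0 : ℝ) < 1 / 2),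
    l2.eventually_le_const (by norm_num : (0 : ℝ) < 1 / 2)] with β hβ h1 h2
  exact ratio_bound (hE β hβ) hβ hN.le h1 h2

/-- The ratio `ν_β[0]/ν_β[1]` goes to `+∞` exponentially fast (with speed larger than
`1 − ε` for every `ε ∈ (0,1)`) as `β → +∞`. -/
theorem eigenMeasure_ratio_cylinders (α : ℝ) (hα : 0 < α)
    (P : ℝ → ℝ) (ν : ℝ → Measure Sig)
    (hE : ∀ β > (0 : ℝ), IsEigenMeasure α β (P β) (ν β)) :
    (∀ ε : ℝ, 0 < ε → ε < 1 → ∃ β₁ : ℝ, ∀ β ≥ β₁,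
      0 < ν β (cyl 1) ∧
      ENNReal.ofReal (Real.exp ((1 - ε) * β)) * ν β (cyl 1) ≤ ν β (cyl 0)) ∧
    Tendsto (fun β => (ν β (cyl 0)).toReal / (ν β (cyl 1)).toReal) atTop atTop := by
  refine ⟨fun ε hε _ => ?_, ?_⟩
  · obtain ⟨β₁, hβ₁⟩ := eventually_atTop.1 (eventually_ratio hα hE hε)
    -- `max β₁ 1` makes `β` positive, so that `ν β` is a probability measure.
    refine ⟨max β₁ 1, fun β hβ => ?_⟩
    obtain ⟨hpos, hle⟩ := hβ₁ β ((le_max_left _ _).trans hβ)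
    have := (hE β (one_pos.trans_le ((le_max_right _ _).trans hβ))).prob
    refine ⟨(ENNReal.toReal_pos_iff.1 hpos).1, ?_⟩
    rw [← ofReal_measureReal (μ := ν β) (s := cyl 1), ← ofReal_measureReal (μ := ν β) (s := cyl 0),
      ← ENNReal.ofReal_mul (Real.exp_pos _).le]
    exact ENNReal.ofReal_le_ofReal hle
  · have hexp : Tendsto (fun β : ℝ => Real.exp ((1 - 1 / 2) * β)) atTop atTop :=
      Real.tendsto_exp_atTop.comp (tendsto_id.const_mul_atTop (by norm_num))
    refine tendsto_atTop_mono' _ ?_ hexp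
    filter_upwards [eventually_ratio hα hE (by norm_num : (0 : ℝ) < 1 / 2)] with β hβ
    exact (le_div_iff₀ hβ.1).2 hβ.2

end
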